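/- arXiv:math/0703452 — 2 statements merged into one kernel-verified Lean document; each statement's English description precedes it below -/
import Mathlib

section
/- For every compact set K ⊆ ℂ, the sequence of functions z ↦ (−1)^{k+1}·(2π)^{2k+1}/(2·(2k+1)!)·B_{2k+1}(z) converges uniformly on K to z ↦ sin(2πz) as k → ∞, where B_{2k+1} is the Bernoulli polynomial of odd degree 2k+1 evaluated over ℂ. -/
open Filter Real

/-- The `n`-th Bernoulli polynomial evaluated at a complex argument. -/
noncomputable def BernoulliC (n : ℕ) (z : ℂ) : ℂ :=
  Polynomial.aeval z (Polynomial.bernoulli n)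

/-!
Write `aₙ = (2πi)ⁿ Bₙ / n!`. For `n ≥ 2` the Fourier expansion of the Bernoulli functions at `0`
gives `aₙ = -(1 + (-1)ⁿ) ζ(n)`, so `aₙ + (1 + (-1)ⁿ) → 0` because `ζ(n) → 1`. The scaled polynomial
`(2πi)ⁿ Bₙ(z) / n!` is the truncated convolution `∑_{m ≤ n} aₙ₋ₘ wᵐ / m!` at `w = 2πiz`, whereas
`exp w + (-1)ⁿ exp (-w) = ∑ₘ (1 + (-1)ⁿ⁺ᵐ) wᵐ / m!`. In the sum of the two series every coefficient
tends to `0` while staying bounded, so dominated convergence, uniformly for `z` in a bounded set,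
gives `(2πi)ⁿ Bₙ(z) / n! + exp (2πiz) + (-1)ⁿ exp (-2πiz) → 0`. For odd `n` the two exponentials
combine into `2i sin (2πz)`.
-/

section

open Topology
open scoped Nat
open Complex (I)

theorem tendstoUniformlyOn_tsum_zero_of_dominated {ι α β E : Type*} [NormedAddCommGroup E]
    [CompleteSpace E] {l : Filter ι} {s : Set α} {f : ι → α → β → E} {bound : β → ℝ}
    (hbound : Summable bound)
    (hf : ∀ b, TendstoUniformlyOn (fun i x => f i x b) (fun _ => 0) l s)
    (hle : ∀ᶠ i in l, ∀ x ∈ s, ∀ b, ‖f i x b‖ ≤ bound b) :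
    TendstoUniformlyOn (fun i x => ∑' b, f i x b) (fun _ => 0) l s := by
  rw [← tendsto_prod_principal_iff]
  have hlim := tendsto_tsum_of_dominated_convergence (𝓕 := l ×ˢ 𝓟 s)
    (f := fun p b => f p.1 p.2 b) (g := fun _ => 0) hbound
    (fun b => tendsto_prod_principal_iff.mpr (hf b))
    (eventually_prod_principal_iff.mpr hle)
  rwa [tsum_zero] at hlim

theorem tendstoUniformlyOn_tsum_mul_pow_div_factorial {ι 𝕜 : Type*} [RCLike 𝕜] {l : Filter ι}
    {a : ι → ℕ → 𝕜} {C : ℝ} (ha : ∀ m, Tendsto (a · m) l (𝓝 0)) (hC : ∀ i m, ‖a i m‖ ≤ C)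
    {s : Set 𝕜} (hs : Bornology.IsBounded s) :
    TendstoUniformlyOn (fun i w => ∑' m, a i m * (w ^ m / m !)) (fun _ => 0) l s := by
  obtain ⟨R, hR⟩ := hs.exists_norm_le
  have hpow (m : ℕ) {w : 𝕜} (hw : w ∈ s) : ‖w ^ m / (m !)‖ ≤ R ^ m / m ! := by
    rw [norm_div, norm_pow, RCLike.norm_natCast]
    gcongr
    exact hR w hw
  refine tendstoUniformlyOn_tsum_zero_of_dominated
    ((Real.summable_pow_div_factorial R).mul_left C) (fun m => ?_)
    (.of_forall fun i w hw m => ?_)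
  · rw [← tendsto_prod_principal_iff]
    refine ((ha m).comp tendsto_fst).zero_mul_isBoundedUnder_le ⟨R ^ m / m !, ?_⟩
    exact eventually_map.mpr
      (eventually_prod_principal_iff.mpr (.of_forall fun _ w hw => hpow m hw))
  · rw [norm_mul]
    exact mul_le_mul (hC i m) (hpow m hw) (norm_nonneg _) ((norm_nonneg _).trans (hC i m))

theorem tendsto_riemannZeta_natCast_atTop :
    Tendsto (fun n : ℕ => riemannZeta n) atTop (𝓝 1) := by
  have hL : Tendsto (fun x : ℝ => LSeries 1 x) atTop (𝓝 1) :=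
    LSeries.tendsto_atTop (by rw [LSeries.abscissaOfAbsConv_one]; exact EReal.coe_lt_top 1)
  refine (hL.comp tendsto_natCast_atTop_atTop).congr' ?_
  filter_upwards [eventually_gt_atTop 1] with n hn
  simpa using LSeries_one_eq_riemannZeta (s := n) (by simpa using hn)

/-- The Bernoulli number `Bₙ` multiplied by `(2πi)ⁿ / n!`, the normalisation under which its size
is that of `ζ(n)`. -/
noncomputable def scaledBernoulli (n : ℕ) : ℂ :=
  (2 * π * I) ^ n / n ! * bernoulli n

theorem scaledBernoulli_eq_neg_mul_riemannZeta {n : ℕ} (hn : 2 ≤ n) :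
    scaledBernoulli n = -((1 + (-1) ^ n) * riemannZeta n) := by
  have hfourier := hasSum_one_div_nat_pow_mul_fourier hn (x := 0) (by simp)
  simp only [QuotientAddGroup.mk_zero, fourier_eval_zero, mul_one, bernoulliFun_eval_zero,
    Complex.ofReal_ratCast] at hfourier
  rw [zeta_nat_eq_tsum_of_gt_one hn, mul_comm, ← tsum_mul_right, hfourier.tsum_eq,
    scaledBernoulli]
  ring

theorem norm_one_add_neg_one_pow_le_two (n : ℕ) : ‖(1 + (-1) ^ n : ℂ)‖ ≤ 2 :=
  (norm_add_le _ _).trans (by norm_num)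

theorem tendsto_scaledBernoulli_add_one_add_neg_one_pow :
    Tendsto (fun n => scaledBernoulli n + (1 + (-1) ^ n)) atTop (𝓝 0) := by
  have hzeta : Tendsto (fun n : ℕ => 1 - riemannZeta n) atTop (𝓝 0) := by
    simpa using tendsto_riemannZeta_natCast_atTop.const_sub 1
  refine (hzeta.zero_mul_isBoundedUnder_le
    (isBoundedUnder_of ⟨2, norm_one_add_neg_one_pow_le_two⟩)).congr' ?_
  filter_upwards [eventually_ge_atTop 2] with n hn
  rw [scaledBernoulli_eq_neg_mul_riemannZeta hn]
  ring

/-- The Bernoulli polynomial with the scaling of `scaledBernoulli`. -/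
noncomputable def scaledBernoulliC (n : ℕ) (z : ℂ) : ℂ :=
  (2 * π * I) ^ n / n ! * BernoulliC n z

theorem scaledBernoulliC_eq_sum (n : ℕ) (z : ℂ) :
    scaledBernoulliC n z =
      ∑ m ∈ Finset.range (n + 1), scaledBernoulli (n - m) * ((2 * π * I * z) ^ m / m !) := by
  rw [scaledBernoulliC, BernoulliC, Polynomial.bernoulli_def, map_sum, Finset.mul_sum]
  refine Finset.sum_congr rfl fun m hm => ?_
  have hmn : m ≤ n := Finset.mem_range_succ_iff.mp hm
  have hn : (n ! : ℂ) ≠ 0 := mod_cast n.factorial_ne_zero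
  rw [Polynomial.aeval_monomial, eq_ratCast, Rat.cast_mul, Rat.cast_natCast,
    Nat.cast_choose ℂ hmn, scaledBernoulli, ← pow_sub_mul_pow _ hmn, mul_pow _ z]
  field_simp

theorem hasSum_exp_add_neg_one_pow_mul_exp_neg (n : ℕ) (w : ℂ) :
    HasSum (fun m : ℕ => (1 + (-1) ^ (n + m)) * (w ^ m / m !))
      (Complex.exp w + (-1) ^ n * Complex.exp (-w)) := by
  have hexp (u : ℂ) : HasSum (fun m : ℕ => u ^ m / m !) (Complex.exp u) := by
    simpa only [Complex.exp_eq_exp_ℂ] using NormedSpace.expSeries_div_hasSum_exp u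
  refine ((hexp w).add ((hexp (-w)).mul_left ((-1) ^ n))).congr_fun fun m => ?_
  rw [neg_pow w, pow_add]
  ring

/-- The coefficient of `wᵐ / m!`, where `w = 2πiz`, in
`(2πi)ⁿ Bₙ(z) / n! + exp w + (-1)ⁿ exp (-w)`. For `m > n` only the exponentials contribute. -/
noncomputable def errorCoeff (n m : ℕ) : ℂ :=
  (if m ≤ n then scaledBernoulli (n - m) else 0) + (1 + (-1) ^ (n + m))

theorem errorCoeff_of_le {n m : ℕ} (h : m ≤ n) :
    errorCoeff n m = scaledBernoulli (n - m) + (1 + (-1) ^ (n - m)) := by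
  have hsign : (-1 : ℂ) ^ (n + m) = (-1) ^ (n - m) := by
    rw [show n + m = n - m + 2 * m by omega, pow_add, pow_mul]
    simp
  rw [errorCoeff, if_pos h, hsign]

theorem tendsto_errorCoeff (m : ℕ) : Tendsto (errorCoeff · m) atTop (𝓝 0) := by
  refine (tendsto_scaledBernoulli_add_one_add_neg_one_pow.comp
    (tendsto_sub_atTop_nat m)).congr' ?_
  filter_upwards [eventually_ge_atTop m] with n hn
  exact (errorCoeff_of_le hn).symm

theorem exists_norm_errorCoeff_le : ∃ C, ∀ n m, ‖errorCoeff n m‖ ≤ C := by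
  obtain ⟨C, hC⟩ := (Metric.isBounded_range_of_tendsto _
    tendsto_scaledBernoulli_add_one_add_neg_one_pow).exists_norm_le
  refine ⟨max C 2, fun n m => ?_⟩
  rcases le_or_gt m n with hmn | hnm
  · rw [errorCoeff_of_le hmn]
    exact (hC _ ⟨n - m, rfl⟩).trans (le_max_left _ _)
  · rw [errorCoeff, if_neg hnm.not_ge, zero_add]
    exact (norm_one_add_neg_one_pow_le_two _).trans (le_max_right _ _)

theorem hasSum_errorCoeff (n : ℕ) (z : ℂ) :
    HasSum (fun m => errorCoeff n m * ((2 * π * I * z) ^ m / m !))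
      (scaledBernoulliC n z +
        (Complex.exp (2 * π * I * z) + (-1) ^ n * Complex.exp (-(2 * π * I * z)))) := by
  have htrunc : HasSum
      (fun m => (if m ≤ n then scaledBernoulli (n - m) else 0) * ((2 * π * I * z) ^ m / m !))
      (scaledBernoulliC n z) := by
    rw [scaledBernoulliC_eq_sum, ← Finset.sum_congr rfl fun m hm =>
      congrArg (· * _) (if_pos (Finset.mem_range_succ_iff.mp hm))]
    refine hasSum_sum_of_ne_finset_zero fun m hm => ?_
    rw [if_neg (mt Finset.mem_range_succ_iff.mpr hm), zero_mul]
  exact (htrunc.add (hasSum_exp_add_neg_one_pow_mul_exp_neg n (2 * π * I * z))).congr_fun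
    fun m => add_mul _ _ _

theorem tendstoUniformlyOn_scaledBernoulliC_add_exp {K : Set ℂ} (hK : Bornology.IsBounded K) :
    TendstoUniformlyOn
      (fun n z => scaledBernoulliC n z +
        (Complex.exp (2 * π * I * z) + (-1) ^ n * Complex.exp (-(2 * π * I * z))))
      (fun _ => 0) atTop K := by
  obtain ⟨C, hC⟩ := exists_norm_errorCoeff_le
  have hbounded : Bornology.IsBounded ((2 * π * I * ·) '' K) := hK.smul₀ (2 * π * I)
  have hseries := (tendstoUniformlyOn_tsum_mul_pow_div_factorial tendsto_errorCoeff hC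
    hbounded).comp (2 * π * I * ·)
  refine (hseries.mono (Set.subset_preimage_image _ K)).congr (.of_forall fun n z _ => ?_)
  exact (hasSum_errorCoeff n z).tsum_eq

theorem exp_mul_I_sub_exp_neg_mul_I (z : ℂ) :
    Complex.exp (z * I) - Complex.exp (-(z * I)) = 2 * I * Complex.sin z := by
  rw [Complex.sin, ← neg_mul]
  linear_combination (Complex.exp (z * I) - Complex.exp (-z * I)) * Complex.I_sq

theorem odd_scaledBernoulliC_sub_sin (k : ℕ) (z : ℂ) :
    (-1) ^ (k + 1) * (2 * π) ^ (2 * k + 1) / (2 * (2 * k + 1)!) * BernoulliC (2 * k + 1) z -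
        Complex.sin (2 * π * z) =
      I / 2 * (scaledBernoulliC (2 * k + 1) z +
        (Complex.exp (2 * π * I * z) +
          (-1) ^ (2 * k + 1) * Complex.exp (-(2 * π * I * z)))) := by
  have hI : I ^ (2 * k + 1) = (-1) ^ k * I := by
    rw [pow_succ, pow_mul, Complex.I_sq]
  have hneg : (-1 : ℂ) ^ (2 * k + 1) = -1 := Odd.neg_one_pow ⟨k, rfl⟩
  rw [hneg, neg_one_mul, ← sub_eq_add_neg, mul_right_comm _ I, exp_mul_I_sub_exp_neg_mul_I,
    scaledBernoulliC, mul_pow _ I, hI, pow_succ _ k]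
  linear_combination (-Complex.sin (2 * π * z) - (-1) ^ k * (2 * π) ^ (2 * k + 1) /
    (2 * (2 * k + 1)!) * BernoulliC (2 * k + 1) z) * Complex.I_sq

theorem bernoulli_odd_tendstoUniformlyOn_sin_general {K : Set ℂ} (hK : Bornology.IsBounded K) :
    TendstoUniformlyOn
      (fun (k : ℕ) (z : ℂ) =>
        (-1 : ℂ) ^ (k + 1) * (2 * (π : ℂ)) ^ (2 * k + 1) / (2 * ((2 * k + 1).factorial : ℂ)) *
          BernoulliC (2 * k + 1) z)
      (fun z => Complex.sin (2 * (π : ℂ) * z)) atTop K := by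
  have hodd : Tendsto (fun k : ℕ => 2 * k + 1) atTop atTop :=
    tendsto_atTop_mono (fun k => (by omega : k ≤ 2 * k + 1)) tendsto_id
  have herror := Metric.tendstoUniformlyOn_iff.mp (tendstoUniformlyOn_scaledBernoulliC_add_exp hK)
  rw [Metric.tendstoUniformlyOn_iff]
  intro ε hε
  filter_upwards [hodd.eventually (herror ε hε)] with k hk z hz
  rw [dist_comm, dist_eq_norm, odd_scaledBernoulliC_sub_sin, norm_mul]
  have hhalf : ‖I / 2‖ ≤ 1 := by
    rw [norm_div, Complex.norm_I, Complex.norm_ofNat]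
    norm_num
  exact (mul_le_of_le_one_left (norm_nonneg _) hhalf).trans_lt
    (by simpa only [dist_zero_left] using hk z hz)

end

/-- On every compact subset of `ℂ`, the rescaled odd-degree Bernoulli polynomials
`(-1)^{k+1} (2π)^{2k+1} / (2 (2k+1)!) · B_{2k+1}(z)` converge uniformly to `sin (2πz)`. -/
theorem bernoulli_odd_tendstoUniformlyOn_sin (K : Set ℂ) (hK : IsCompact K) :
    TendstoUniformlyOn
      (fun (k : ℕ) (z : ℂ) =>
        (-1 : ℂ) ^ (k + 1) * (2 * (π : ℂ)) ^ (2 * k + 1) / (2 * ((2 * k + 1).factorial : ℂ)) *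
          BernoulliC (2 * k + 1) z)
      (fun z => Complex.sin (2 * (π : ℂ) * z)) atTop K := by
  exact bernoulli_odd_tendstoUniformlyOn_sin_general hK.isBounded
end

section
/- For every integer n ≥ 2 and every real number x, |(2πi)^n/n! · B_n({x}) + e^{2πix} + (−1)^n·e^{−2πix}| ≤ 2^{3−n}, where {x} = x − ⌊x⌋ is the fractional part of x. In particular, the functions x ↦ (2πi)^n/n! · B_n({x}) converge uniformly on ℝ, with the stated exponential rate, to x ↦ −(e^{2πix} + (−1)^n e^{−2πix}). -/
/-!
The Fourier expansion of the periodized Bernoulli polynomial is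
`-(2πi)^n/n! · B_n({x}) = ∑_{k ≥ 1} (e^{2πikx} + (-1)^n e^{-2πikx}) / k^n`, so adding the `k = 1`
term to `(2πi)^n/n! · B_n({x})` leaves minus the tail. Each numerator has modulus at most `2`, hence
the tail is at most `2 ∑_{k ≥ 2} k^{-n} ≤ 2 · 2^{2-n} ∑_{k ≥ 2} k^{-2}`, where the last sum is at
most `1` by comparison with `∑_{k ≥ 2} (1/(k-1) - 1/k)`.
-/

open Filter Real

theorem bernoulliC_ofReal (n : ℕ) (x : ℝ) : BernoulliC n (x : ℂ) = bernoulliFun n x := by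
  rw [BernoulliC, bernoulliFun, Polynomial.eval_map_algebraMap]
  exact Polynomial.aeval_algebraMap_apply ℂ x (Polynomial.bernoulli n)

section OrderedField

variable {K : Type*} [Field K] [LinearOrder K] [IsStrictOrderedRing K]

theorem one_div_pow_le_one_div_pow_mul {a b : K} (ha : 0 < a) (hab : a ≤ b) {m n : ℕ}
    (hmn : m ≤ n) : 1 / b ^ n ≤ 1 / a ^ (n - m) * (1 / b ^ m) := by
  have hb : 0 < b := ha.trans_le hab
  calc 1 / b ^ n = 1 / b ^ (n - m) * (1 / b ^ m) := by
        rw [one_div_mul_one_div, ← pow_add, Nat.sub_add_cancel hmn]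
    _ ≤ 1 / a ^ (n - m) * (1 / b ^ m) := by gcongr

theorem sum_range_one_div_nat_add_sq_le {N : ℕ} (hN : N ≠ 0) (m : ℕ) :
    ∑ k ∈ Finset.range m, 1 / ((k + (N + 1) : ℕ) : K) ^ 2 ≤ 1 / (N : K) := by
  calc ∑ k ∈ Finset.range m, 1 / ((k + (N + 1) : ℕ) : K) ^ 2
      = ∑ i ∈ Finset.Ioc N (N + m), ((i : K) ^ 2)⁻¹ := by
        rw [← Finset.Ico_add_one_add_one_eq_Ioc, Finset.sum_Ico_eq_sum_range,
          Nat.add_right_comm, Nat.add_sub_cancel_left]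
        simp only [one_div, Nat.add_comm]
    _ ≤ (N : K)⁻¹ - ((N + m : ℕ) : K)⁻¹ := sum_Ioc_inv_sq_le_sub hN (Nat.le_add_right N m)
    _ ≤ 1 / N := by
        rw [one_div]
        exact sub_le_self _ (by positivity)

end OrderedField

theorem tsum_one_div_nat_add_pow_le {N n : ℕ} (hN : N ≠ 0) (hn : 2 ≤ n) :
    ∑' k : ℕ, 1 / ((k + (N + 1) : ℕ) : ℝ) ^ n ≤ 1 / (N * ((N : ℝ) + 1) ^ (n - 2)) := by
  refine Real.tsum_le_of_sum_range_le (fun k ↦ by positivity) fun m ↦ ?_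
  calc ∑ k ∈ Finset.range m, 1 / ((k + (N + 1) : ℕ) : ℝ) ^ n
      ≤ ∑ k ∈ Finset.range m, 1 / ((N : ℝ) + 1) ^ (n - 2) * (1 / ((k + (N + 1) : ℕ) : ℝ) ^ 2) := by
        refine Finset.sum_le_sum fun k _ ↦ one_div_pow_le_one_div_pow_mul (by positivity) ?_ hn
        exact_mod_cast Nat.le_add_left (N + 1) k
    _ ≤ 1 / ((N : ℝ) + 1) ^ (n - 2) * (1 / N) := by
        rw [← Finset.mul_sum]
        gcongr
        exact sum_range_one_div_nat_add_sq_le hN m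
    _ = 1 / (N * ((N : ℝ) + 1) ^ (n - 2)) := by rw [one_div_mul_one_div, mul_comm]

/-- The contribution `(e^{2πikx} + (-1)^n e^{-2πikx}) / k^n` of the frequencies `±k` to the
Fourier series of `-(2πi)^n/n! · B_n({x})`. For `k = 0 < n` it is `0`, by the convention
`1 / 0 = 0`, so sums may start at `k = 0`. -/
noncomputable def bernoulliFourierTerm (n k : ℕ) (x : UnitAddCircle) : ℂ :=
  1 / (k : ℂ) ^ n * (fourier k x + (-1) ^ n * fourier (-k) x)

theorem bernoulliFourierTerm_zero {n : ℕ} (hn : n ≠ 0) (x : UnitAddCircle) :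
    bernoulliFourierTerm n 0 x = 0 := by
  simp [bernoulliFourierTerm, hn]

theorem bernoulliFourierTerm_coe (n k : ℕ) (x : ℝ) :
    bernoulliFourierTerm n k (x : UnitAddCircle) =
      1 / (k : ℂ) ^ n * (Complex.exp (2 * π * Complex.I * k * x) +
        (-1) ^ n * Complex.exp (-(2 * π * Complex.I * k * x))) := by
  simp only [bernoulliFourierTerm, fourier_coe_apply]
  simp

theorem norm_bernoulliFourierTerm_le (n k : ℕ) (x : UnitAddCircle) :
    ‖bernoulliFourierTerm n k x‖ ≤ 2 * (1 / (k : ℝ) ^ n) := by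
  have norm_fourier (m : ℤ) : ‖fourier m x‖ = 1 := Circle.norm_coe _
  have norm_pair_le : ‖fourier k x + (-1) ^ n * fourier (-k) x‖ ≤ 2 := by
    refine (norm_add_le _ _).trans_eq ?_
    rw [norm_mul, norm_pow, norm_neg, norm_one, one_pow, norm_fourier, norm_fourier]
    norm_num
  rw [bernoulliFourierTerm, norm_mul, norm_div, norm_one, norm_pow, Complex.norm_natCast, mul_comm]
  gcongr

theorem hasSum_bernoulliFourierTerm {n : ℕ} (hn : 2 ≤ n) (x : ℝ) :
    HasSum (fun k ↦ bernoulliFourierTerm n k x)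
      (-((2 * π * Complex.I) ^ n / n.factorial * bernoulliFun n (Int.fract x))) := by
  have hx : Int.fract x ∈ Set.Icc (0 : ℝ) 1 := ⟨Int.fract_nonneg x, (Int.fract_lt_one x).le⟩
  simpa only [bernoulliFourierTerm, AddCircle.coe_fract, neg_div, neg_mul] using
    hasSum_one_div_nat_pow_mul_fourier hn hx

theorem norm_bernoulliFun_fract_add_sum_bernoulliFourierTerm_le {n N : ℕ} (hn : 2 ≤ n) (hN : N ≠ 0)
    (x : ℝ) :
    ‖(2 * π * Complex.I) ^ n / n.factorial * bernoulliFun n (Int.fract x) +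
        ∑ k ∈ Finset.range (N + 1), bernoulliFourierTerm n k x‖ ≤
      2 / (N * ((N : ℝ) + 1) ^ (n - 2)) := by
  have tail_hasSum := (hasSum_nat_add_iff' (N + 1)).mpr (hasSum_bernoulliFourierTerm hn x)
  have majorant_summable : Summable fun k : ℕ ↦ 1 / ((k + (N + 1) : ℕ) : ℝ) ^ n :=
    (summable_nat_add_iff (N + 1)).mpr (Real.summable_one_div_nat_pow.mpr hn)
  rw [← norm_neg, neg_add']
  calc _ ≤ 2 * ∑' k : ℕ, 1 / ((k + (N + 1) : ℕ) : ℝ) ^ n :=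
        tail_hasSum.norm_le_of_bounded (majorant_summable.hasSum.mul_left 2)
          fun k ↦ norm_bernoulliFourierTerm_le n (k + (N + 1)) x
    _ ≤ 2 * (1 / (N * ((N : ℝ) + 1) ^ (n - 2))) := by
        gcongr
        exact tsum_one_div_nat_add_pow_le hN hn
    _ = 2 / (N * ((N : ℝ) + 1) ^ (n - 2)) := mul_one_div _ _

/-- For `n ≥ 2` and real `x`,
`|(2πi)^n/n! · B_n({x}) + e^{2πix} + (-1)^n e^{-2πix}| ≤ 2^{3-n}`; in particular the
functions `x ↦ (2πi)^n/n! · B_n({x})` converge uniformly on `ℝ`, with this exponential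
rate, to `x ↦ -(e^{2πix} + (-1)^n e^{-2πix})`. -/
theorem bernoulli_fract_close_to_exponentials (n : ℕ) (hn : 2 ≤ n) (x : ℝ) :
    norm ((2 * (π : ℂ) * Complex.I) ^ n / (n.factorial : ℂ) *
          BernoulliC n ((Int.fract x : ℝ) : ℂ) +
        Complex.exp (2 * (π : ℂ) * Complex.I * (x : ℂ)) +
        (-1 : ℂ) ^ n * Complex.exp (-(2 * (π : ℂ) * Complex.I * (x : ℂ)))) ≤
      (2 : ℝ) ^ (3 - (n : ℤ)) := by
  have first_terms : ∑ k ∈ Finset.range (1 + 1), bernoulliFourierTerm n k x =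
      Complex.exp (2 * π * Complex.I * x) + (-1) ^ n * Complex.exp (-(2 * π * Complex.I * x)) := by
    rw [Finset.sum_range_succ, Finset.sum_range_one, bernoulliFourierTerm_zero (by lia), zero_add,
      bernoulliFourierTerm_coe]
    simp
  have bound_eq : 2 / ((1 : ℕ) * (((1 : ℕ) : ℝ) + 1) ^ (n - 2)) = (2 : ℝ) ^ (3 - (n : ℤ)) := by
    rw [show 3 - (n : ℤ) = 1 - (n - 2 : ℕ) by lia, zpow_sub₀ two_ne_zero, zpow_one, zpow_natCast]
    norm_num
  rw [bernoulliC_ofReal, add_assoc, ← first_terms, ← bound_eq]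
  exact norm_bernoulliFun_fract_add_sum_bernoulliFourierTerm_le hn one_ne_zero x
end
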